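/- Let x be a real number and let a be a complex number such that a, a+1/2 (and hence all Pochhammer denominators (a)_k, (a+1/2)_k) are nonzero for all k, i.e. a and a+1/2 are not nonpositive integers or zero. Then Σ_{k=0}^∞ (x/4)^{2k} H_{2k}(x/2) / ((a+1/2)_k k!) = e^{x²/4} · Σ_{k=0}^∞ (a/2)_k ((a+1)/2)_k (−x²)^k / ((a)_k (a+1/2)_k k!). -/

import Mathlib

/-- The Pochhammer symbol `(a)_k = a (a+1) ⋯ (a+k-1)`. -/
noncomputable def poch (a : ℂ) (k : ℕ) : ℂ := Polynomial.eval a (ascPochhammer ℂ k)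

/-- The physicists' Hermite polynomial `H_n(t) = (-1)^n e^{t²} (d/dt)^n e^{-t²}`. -/
noncomputable def physHermite (n : ℕ) (t : ℝ) : ℝ :=
  (-1 : ℝ) ^ n * Real.exp (t ^ 2) * iteratedDeriv n (fun s => Real.exp (-(s ^ 2))) t

/-!
Let `E` be the expectation of the probability density on `[-1, 1]` proportional to
`(1 - s²)^(a - 1)`. Its odd moments vanish and `E[s^(2k)] = (1/2)_k / (a + 1/2)_k`, so applying `E`
to the generating function `∑ H_n(t) (z s)^n / n! = exp (2 t z s - z² s²)` at `t = z = x/2` yields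
the left-hand side. The exponent is then `(x²/4) (1 - (1 - s)²)`, so the same quantity equals
`exp (x²/4) ∑ (-x²/4)^k E[(1 - s)^(2k)] / k!`, and integration by parts evaluates
`E[(1 - s)^n] = 2^n (a)_n / (2a)_n`. Only moments enter, so `E` can be defined on polynomials by its
moment sequence, and no restriction `0 < re a` is needed.
-/

open Finset Polynomial
open scoped Nat

lemma poch_zero (c : ℂ) : poch c 0 = 1 := by simp [poch]

lemma poch_succ (c : ℂ) (k : ℕ) : poch c (k + 1) = poch c k * (c + k) :=
  ascPochhammer_succ_eval k c

lemma poch_one (k : ℕ) : poch 1 k = k ! :=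
  ascPochhammer_eval_one ℂ k

lemma poch_ne_zero {c : ℂ} (hc : ∀ n : ℕ, c ≠ -(n : ℂ)) (k : ℕ) : poch c k ≠ 0 := by
  rw [poch, Ne, ascPochhammer_eval_eq_zero_iff]
  rintro ⟨n, -, hn⟩
  exact hc n (by rw [hn, neg_neg])

lemma poch_two_mul (c : ℂ) (k : ℕ) :
    poch c (2 * k) = 4 ^ k * poch (c / 2) k * poch ((c + 1) / 2) k := by
  induction k with
  | zero => simp [poch_zero]
  | succ k ih =>
    rw [mul_add_one, poch_succ, poch_succ, ih, poch_succ, poch_succ]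
    push_cast
    ring

lemma factorial_two_mul_eq_poch (k : ℕ) : ((2 * k)! : ℂ) = 4 ^ k * poch (1 / 2) k * k ! := by
  rw [← poch_one, poch_two_mul, add_self_div_two, poch_one]

lemma exists_norm_poch_div_poch_le_pow (c d : ℂ) :
    ∃ K : ℝ, 0 ≤ K ∧ ∀ k, ‖poch c k / poch d k‖ ≤ K ^ k := by
  have ratio_tendsto : Filter.Tendsto (fun n : ℕ ↦ (c + n) / (d + n)) Filter.atTop (nhds 1) := by
    simpa using tendsto_add_mul_div_add_mul_atTop_nhds c d 1 (one_ne_zero (α := ℂ))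
  obtain ⟨K, hK⟩ := ratio_tendsto.norm.bddAbove_range
  have ratio_le (n : ℕ) : ‖(c + n) / (d + n)‖ ≤ K := hK ⟨n, rfl⟩
  have hK₀ : 0 ≤ K := (norm_nonneg _).trans (ratio_le 0)
  refine ⟨K, hK₀, fun k ↦ ?_⟩
  induction k with
  | zero => simp [poch_zero]
  | succ k ih =>
    rw [poch_succ, poch_succ, mul_div_mul_comm, norm_mul, pow_succ]
    gcongr
    exact ratio_le k

lemma physHermite_eq_aeval_hermite (n : ℕ) (t : ℝ) :
    physHermite n t = √2 ^ n * aeval (√2 * t) (hermite n) := by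
  have hsq (s : ℝ) : (√2 * s) ^ 2 / 2 = s ^ 2 := by
    rw [mul_pow, Real.sq_sqrt zero_le_two, mul_div_cancel_left₀ _ two_ne_zero]
  have hsmooth : ContDiff ℝ n fun s : ℝ ↦ Real.exp (-(s ^ 2 / 2)) := by fun_prop
  have hderiv : iteratedDeriv n (fun s ↦ Real.exp (-(s ^ 2))) t =
      √2 ^ n * ((-1) ^ n * aeval (√2 * t) (hermite n) * Real.exp (-(t ^ 2))) := by
    have h := congrFun (iteratedDeriv_comp_const_mul hsmooth √2) t
    simp only [hsq] at h
    rw [h, iteratedDeriv_eq_iterate, deriv_gaussian_eq_hermite_mul_gaussian, hsq]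
  have hsign : ((-1 : ℝ) ^ n) * (-1) ^ n = 1 := by rw [← mul_pow]; simp
  have hexp : Real.exp (t ^ 2) * Real.exp (-(t ^ 2)) = 1 := by rw [← Real.exp_add]; simp
  rw [physHermite, hderiv]
  linear_combination √2 ^ n * aeval (√2 * t) (hermite n) *
    (Real.exp (t ^ 2) * Real.exp (-(t ^ 2)) * hsign + hexp)

lemma coeff_hermite_two_mul_add (j l : ℕ) :
    ((coeff (hermite (2 * j + l)) l : ℤ) : ℝ) = (-1) ^ j * (2 * j + l)! / (2 ^ j * j ! * l !) := by
  have hdouble : ((2 * j)! : ℝ) = 2 ^ j * j ! * (2 * j - 1)‼ := by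
    cases j with
    | zero => simp
    | succ j =>
      rw [mul_add_one, Nat.factorial_eq_mul_doubleFactorial, ← mul_add_one 2 j,
        Nat.doubleFactorial_two_mul]
      push_cast
      rfl
  have hpos : ((2 * j - 1)‼ : ℝ) ≠ 0 := mod_cast (Nat.doubleFactorial_pos _).ne'
  rw [coeff_hermite_explicit]
  push_cast
  rw [← Nat.choose_symm_add, Nat.cast_add_choose, hdouble]
  field_simp

lemma physHermite_div_factorial (n : ℕ) (t : ℝ) :
    physHermite n t / n ! =
      ∑ j ∈ range (n / 2 + 1), (-1) ^ j * (2 * t) ^ (n - 2 * j) / (j ! * (n - 2 * j)!) := by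
  rw [physHermite_eq_aeval_hermite, aeval_eq_sum_range, natDegree_hermite, mul_sum, sum_div]
  refine (sum_of_injOn (fun j ↦ n - 2 * j) ?_ ?_ ?_ ?_).symm
  · intro i hi j hj h
    simp only [coe_range, Set.mem_Iio] at hi hj h
    lia
  · intro j hj
    simp only [coe_range, Set.mem_Iio] at hj ⊢
    lia
  · intro i hi hodd
    have : Odd (n + i) := by
      by_contra heven
      rw [Nat.not_odd_iff_even] at heven
      obtain ⟨m, hm⟩ := heven
      rw [mem_range] at hi
      exact hodd ⟨n - m, by simp only [coe_range, Set.mem_Iio]; lia, by dsimp only; lia⟩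
    simp [coeff_hermite_of_odd_add this]
  · intro j hj
    obtain ⟨l, rfl⟩ : ∃ l, n = 2 * j + l := ⟨n - 2 * j, by rw [mem_range] at hj; lia⟩
    have hsq : √2 ^ (2 * j + l) * √2 ^ l = 2 ^ j * 2 ^ l := by
      rw [← pow_add, ← pow_add, show 2 * j + l + l = 2 * (j + l) by ring, pow_mul,
        Real.sq_sqrt zero_le_two]
    rw [Nat.add_sub_cancel_left, zsmul_eq_mul, coeff_hermite_two_mul_add, mul_pow, mul_pow]
    field_simp
    linear_combination -t ^ l * hsq

lemma tsum_eq_tsum_sum_fiber {α β E : Type*} [AddCommGroup E] [UniformSpace E]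
    [IsUniformAddGroup E] [CompleteSpace E] [T2Space E] {f : α → E} (hf : Summable f) (g : α → β)
    {s : β → Finset α} (hs : ∀ b a, a ∈ s b ↔ g a = b) :
    ∑' a, f a = ∑' b, ∑ a ∈ s b, f a := by
  rw [← (hf.hasSum.tsum_fiberwise g).tsum_eq]
  refine tsum_congr fun b ↦ ?_
  have hfiber : g ⁻¹' {b} = s b := by ext a; simp [hs]
  rw [hfiber]
  exact Finset.tsum_subtype (s b) f

lemma map_add_pow_div_factorial {𝕜 A : Type*} [Field 𝕜] [CharZero 𝕜] [CommSemiring A]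
    [Module 𝕜 A] (L : A →ₗ[𝕜] 𝕜) (u v : A) (n : ℕ) :
    L ((u + v) ^ n) / n ! = ∑ p ∈ antidiagonal n, L (u ^ p.1 * v ^ p.2) / (p.1 ! * p.2 !) := by
  rw [(Commute.all u v).add_pow', map_sum, sum_div]
  refine sum_congr rfl fun ⟨i, j⟩ hij ↦ ?_
  obtain rfl := mem_antidiagonal.mp hij
  rw [map_nsmul, nsmul_eq_mul, Nat.cast_add_choose]
  have : ((i + j)! : 𝕜) ≠ 0 := mod_cast Nat.factorial_ne_zero _
  field_simp

/-- `L (exp (c + r)) = exp c * L (exp r)`, with `L` applied termwise to the exponential series. -/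
lemma tsum_map_algebraMap_add_pow {𝕜 A : Type*} [RCLike 𝕜] [CommSemiring A] [Algebra 𝕜 A]
    (L : A →ₗ[𝕜] 𝕜) (c : 𝕜) {r : A} (hr : Summable fun n : ℕ ↦ ‖L (r ^ n) / (n ! : 𝕜)‖) :
    ∑' n : ℕ, L ((algebraMap 𝕜 A c + r) ^ n) / n ! =
      NormedSpace.exp c * ∑' n : ℕ, L (r ^ n) / n ! := by
  rw [NormedSpace.exp_eq_tsum_div, tsum_mul_tsum_eq_tsum_sum_antidiagonal_of_summable_norm
    (NormedSpace.norm_expSeries_div_summable c) hr]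
  refine tsum_congr fun n ↦ (map_add_pow_div_factorial L _ r n).trans ?_
  refine sum_congr rfl fun p _ ↦ ?_
  rw [← map_pow, ← Algebra.smul_def, map_smul, smul_eq_mul, mul_div_mul_comm]

lemma summable_pow_mul_pow_div_factorial_mul {𝕜 : Type*} [RCLike 𝕜] {m : ℕ → 𝕜} {K : ℝ}
    (hm : ∀ n, ‖m n‖ ≤ K ^ n) (b c : 𝕜) :
    Summable fun p : ℕ × ℕ ↦ b ^ p.1 * c ^ p.2 / (p.1 ! * p.2 !) * m (2 * p.1 + p.2) := by
  have hK : 0 ≤ K := by simpa using (norm_nonneg _).trans (hm 1)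
  refine .of_norm_bounded ((Real.summable_pow_div_factorial (‖b‖ * K ^ 2)).mul_of_nonneg
    (Real.summable_pow_div_factorial (‖c‖ * K)) (fun _ ↦ by positivity) fun _ ↦ by positivity) ?_
  rintro ⟨j, l⟩
  calc ‖b ^ j * c ^ l / (j ! * l !) * m (2 * j + l)‖
      = ‖b‖ ^ j * ‖c‖ ^ l / (j ! * l !) * ‖m (2 * j + l)‖ := by simp
    _ ≤ ‖b‖ ^ j * ‖c‖ ^ l / (j ! * l !) * K ^ (2 * j + l) := by gcongr; exact hm _
    _ = (‖b‖ * K ^ 2) ^ j / j ! * ((‖c‖ * K) ^ l / l !) := by ring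

lemma physHermite_div_factorial_mul_pow (n : ℕ) (t : ℝ) (z : ℂ) :
    (physHermite n t : ℂ) / n ! * z ^ n =
      ∑ j ∈ range (n / 2 + 1),
        (-z ^ 2) ^ j * (2 * t * z) ^ (n - 2 * j) / (j ! * (n - 2 * j)!) := by
  have hexplicit := congrArg ((↑) : ℝ → ℂ) (physHermite_div_factorial n t)
  push_cast at hexplicit
  rw [hexplicit, sum_mul]
  refine sum_congr rfl fun j hj ↦ ?_
  obtain ⟨l, rfl⟩ : ∃ l, n = 2 * j + l := ⟨n - 2 * j, by rw [mem_range] at hj; lia⟩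
  rw [Nat.add_sub_cancel_left]
  ring

/-- `L` applied termwise to the generating function
`∑ H_n(t) (z s)^n / n! = exp (2 t z s - z² s²)`. -/
lemma tsum_physHermite_mul_map_pow {A : Type*} [CommSemiring A] [Algebra ℂ A] (L : A →ₗ[ℂ] ℂ)
    {s : A} {K : ℝ} (hL : ∀ n, ‖L (s ^ n)‖ ≤ K ^ n) (t : ℝ) (z : ℂ) :
    ∑' n : ℕ, (physHermite n t : ℂ) / n ! * z ^ n * L (s ^ n) =
      ∑' n : ℕ, L (((-z ^ 2) • s ^ 2 + (2 * t * z) • s) ^ n) / n ! := by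
  have hsum := summable_pow_mul_pow_div_factorial_mul hL (-z ^ 2) (2 * t * z)
  have hfiber (n : ℕ) (p : ℕ × ℕ) :
      p ∈ (range (n / 2 + 1)).image (fun j ↦ (j, n - 2 * j)) ↔ 2 * p.1 + p.2 = n := by
    simp only [mem_image, mem_range, Prod.ext_iff]
    exact ⟨by rintro ⟨j, hj, rfl, hp⟩; lia, fun h ↦ ⟨p.1, by lia, rfl, by lia⟩⟩
  calc ∑' n : ℕ, (physHermite n t : ℂ) / n ! * z ^ n * L (s ^ n)
      = ∑' p : ℕ × ℕ,
          (-z ^ 2) ^ p.1 * (2 * t * z) ^ p.2 / (p.1 ! * p.2 !) * L (s ^ (2 * p.1 + p.2)) := by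
        rw [tsum_eq_tsum_sum_fiber hsum _ hfiber]
        refine tsum_congr fun n ↦ ?_
        rw [sum_image fun _ _ _ _ h ↦ (Prod.ext_iff.mp h).1, physHermite_div_factorial_mul_pow,
          sum_mul]
        refine sum_congr rfl fun j hj ↦ ?_
        rw [Nat.add_sub_cancel' (by rw [mem_range] at hj; lia)]
    _ = ∑' n : ℕ, L (((-z ^ 2) • s ^ 2 + (2 * t * z) • s) ^ n) / n ! := by
        rw [tsum_eq_tsum_sum_fiber hsum (fun p ↦ p.1 + p.2) fun _ _ ↦ mem_antidiagonal]
        refine tsum_congr fun n ↦ ?_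
        rw [map_add_pow_div_factorial]
        refine sum_congr rfl fun p _ ↦ ?_
        rw [_root_.smul_pow, _root_.smul_pow, smul_mul_smul_comm, ← pow_mul, ← pow_add,
          map_smul, smul_eq_mul, div_mul_eq_mul_div]

lemma neg_sq_smul_sq_add_two_mul_smul {R A : Type*} [CommRing R] [CommRing A] [Algebra R A]
    (z : R) (s : A) :
    (-z ^ 2) • s ^ 2 + (2 * z * z) • s = algebraMap R A (z ^ 2) + (-z ^ 2) • (1 - s) ^ 2 := by
  simp only [Algebra.smul_def, map_neg, map_mul, map_pow, map_ofNat]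
  ring

/-- The moments of the probability density proportional to `(1 - s²)^(a - 1)` on `[-1, 1]`, given by
their closed form, which continues them from `0 < re a` to all `a` with
`a + 1/2 ∉ {0, -1, -2, …}`. -/
noncomputable def betaMoment (a : ℂ) (n : ℕ) : ℂ :=
  if Even n then poch (1 / 2) (n / 2) / poch (a + 1 / 2) (n / 2) else 0

/-- The linear functional on polynomials with moments `betaMoment a`: integration against the
density proportional to `(1 - s²)^(a - 1)`, continued to complex `a`. -/
noncomputable def betaFunctional (a : ℂ) : ℂ[X] →ₗ[ℂ] ℂ :=
  (basisMonomials ℂ).constr ℂ (betaMoment a)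

lemma betaMoment_two_mul (a : ℂ) (k : ℕ) :
    betaMoment a (2 * k) = poch (1 / 2) k / poch (a + 1 / 2) k := by
  simp [betaMoment]

lemma betaMoment_two_mul_add_one (a : ℂ) (k : ℕ) : betaMoment a (2 * k + 1) = 0 := by
  simp [betaMoment]

lemma betaFunctional_X_pow (a : ℂ) (n : ℕ) : betaFunctional a (X ^ n) = betaMoment a n := by
  rw [X_pow_eq_monomial]
  exact (basisMonomials ℂ).constr_basis ℂ (betaMoment a) n

lemma betaMoment_add_two {a : ℂ} (ha : ∀ n : ℕ, a + 1 / 2 ≠ -(n : ℂ)) (n : ℕ) :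
    (n + 1 + 2 * a) * betaMoment a (n + 2) = (n + 1) * betaMoment a n := by
  obtain ⟨k, rfl | rfl⟩ := n.even_or_odd'
  · have hk := poch_ne_zero ha k
    have hk' : a + 1 / 2 + k ≠ 0 := fun h ↦ ha k (eq_neg_of_add_eq_zero_left h)
    rw [← mul_add_one 2 k, betaMoment_two_mul, betaMoment_two_mul, poch_succ, poch_succ,
      mul_div_assoc', mul_div_assoc', div_eq_div_iff (mul_ne_zero hk hk') hk]
    push_cast
    ring
  · rw [show 2 * k + 1 + 2 = 2 * (k + 1) + 1 by ring, betaMoment_two_mul_add_one,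
      betaMoment_two_mul_add_one]
    simp

lemma exists_norm_betaMoment_le_pow (a : ℂ) :
    ∃ K : ℝ, ∀ n, ‖betaMoment a n‖ ≤ K ^ n := by
  obtain ⟨K, hK₀, hK⟩ := exists_norm_poch_div_poch_le_pow (1 / 2) (a + 1 / 2)
  refine ⟨√K, fun n ↦ ?_⟩
  obtain ⟨k, rfl | rfl⟩ := n.even_or_odd'
  · rw [betaMoment_two_mul, pow_mul, Real.sq_sqrt hK₀]
    exact hK k
  · rw [betaMoment_two_mul_add_one, norm_zero]
    positivity

/-- Integration by parts: the boundary terms `(1 - s²)^a p(s)` vanish at `s = ±1`. -/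
lemma betaFunctional_one_sub_X_sq_mul_derivative {a : ℂ} (ha : ∀ n : ℕ, a + 1 / 2 ≠ -(n : ℂ))
    (p : ℂ[X]) :
    betaFunctional a ((1 - X ^ 2) * derivative p) = 2 * a * betaFunctional a (X * p) := by
  induction p using Polynomial.induction_on' with
  | add p q hp hq => rw [derivative_add, mul_add, mul_add, map_add, map_add, hp, hq, mul_add]
  | monomial n c =>
    rw [← C_mul_X_pow_eq_monomial, ← smul_eq_C_mul, derivative_smul, mul_smul_comm, mul_smul_comm,
      map_smul, map_smul, smul_eq_mul, smul_eq_mul, ← pow_succ']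
    cases n with
    | zero =>
      have hodd : betaFunctional a (X ^ (0 + 1)) = 0 := by
        rw [betaFunctional_X_pow]
        exact betaMoment_two_mul_add_one a 0
      simp only [hodd, pow_zero, derivative_one, mul_zero, map_zero]
    | succ n =>
      have hderiv : (1 - X ^ 2) * derivative (X ^ (n + 1)) =
          ((n : ℂ) + 1) • (X ^ n - X ^ (n + 2) : ℂ[X]) := by
        rw [derivative_X_pow_succ, smul_eq_C_mul]
        ring
      rw [hderiv, map_smul, map_sub, smul_eq_mul]
      simp only [betaFunctional_X_pow]
      linear_combination -c * betaMoment_add_two ha n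

lemma betaFunctional_one_sub_X_pow_succ {a : ℂ} (ha : ∀ n : ℕ, a + 1 / 2 ≠ -(n : ℂ)) (n : ℕ) :
    (2 * a + n) * betaFunctional a ((1 - X) ^ (n + 1)) =
      2 * (a + n) * betaFunctional a ((1 - X) ^ n) := by
  have hderiv : (1 - X ^ 2) * derivative ((1 - X) ^ n) =
      (n : ℂ) • ((1 - X) ^ (n + 1) - (2 : ℂ) • (1 - X) ^ n : ℂ[X]) := by
    cases n with
    | zero => simp
    | succ n =>
      simp only [derivative_pow, derivative_sub, derivative_one, derivative_X, smul_eq_C_mul,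
        Nat.add_sub_cancel, map_natCast, map_ofNat]
      ring
  have hmul : X * (1 - X) ^ n = ((1 - X) ^ n - (1 - X) ^ (n + 1) : ℂ[X]) := by ring
  have hparts := betaFunctional_one_sub_X_sq_mul_derivative ha ((1 - X) ^ n)
  rw [hderiv, hmul, map_smul, map_sub, map_sub, map_smul, smul_eq_mul, smul_eq_mul] at hparts
  linear_combination hparts

lemma poch_mul_betaFunctional_one_sub_X_pow {a : ℂ} (ha : ∀ n : ℕ, a + 1 / 2 ≠ -(n : ℂ)) (n : ℕ) :
    poch (2 * a) n * betaFunctional a ((1 - X) ^ n) = 2 ^ n * poch a n := by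
  induction n with
  | zero =>
    have hone := betaFunctional_X_pow a 0
    rw [pow_zero] at hone
    simp [hone, betaMoment, poch_zero]
  | succ n ih =>
    rw [poch_succ, poch_succ, mul_assoc, betaFunctional_one_sub_X_pow_succ ha]
    linear_combination 2 * (a + n) * ih

lemma betaFunctional_one_sub_X_pow_two_mul {a : ℂ} (ha : ∀ n : ℕ, a ≠ -(n : ℂ))
    (ha' : ∀ n : ℕ, a + 1 / 2 ≠ -(n : ℂ)) (k : ℕ) :
    betaFunctional a ((1 - X) ^ (2 * k)) =
      4 ^ k * (poch (a / 2) k * poch ((a + 1) / 2) k / (poch a k * poch (a + 1 / 2) k)) := by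
  have hmoment := poch_mul_betaFunctional_one_sub_X_pow ha' (2 * k)
  have hsplit : poch (2 * a) (2 * k) = 4 ^ k * poch a k * poch (a + 1 / 2) k := by
    rw [poch_two_mul, mul_div_cancel_left₀ a two_ne_zero, add_div,
      mul_div_cancel_left₀ a two_ne_zero]
  rw [hsplit, poch_two_mul, pow_mul 2, show (2 : ℂ) ^ 2 = 4 by norm_num] at hmoment
  rw [← mul_div_assoc, eq_div_iff (mul_ne_zero (poch_ne_zero ha k) (poch_ne_zero ha' k))]
  refine mul_left_cancel₀ (pow_ne_zero k (by norm_num : (4 : ℂ) ≠ 0)) ?_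
  linear_combination hmoment

lemma betaFunctional_smul_one_sub_X_sq_pow_div_factorial {a : ℂ} (ha : ∀ n : ℕ, a ≠ -(n : ℂ))
    (ha' : ∀ n : ℕ, a + 1 / 2 ≠ -(n : ℂ)) (x : ℂ) (k : ℕ) :
    betaFunctional a (((-(x / 2) ^ 2) • (1 - X) ^ 2) ^ k) / k ! =
      poch (a / 2) k * poch ((a + 1) / 2) k * (-x ^ 2) ^ k /
        (poch a k * poch (a + 1 / 2) k * k !) := by
  have hpow : (-(x / 2) ^ 2) ^ k * 4 ^ k = (-x ^ 2) ^ k := by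
    rw [← mul_pow]
    ring
  rw [_root_.smul_pow, ← pow_mul, map_smul, smul_eq_mul,
    betaFunctional_one_sub_X_pow_two_mul ha ha', ← hpow]
  ring

lemma summable_norm_poch_mul_poch_mul_pow_div (a b c d w : ℂ) :
    Summable fun k : ℕ ↦
      ‖poch a k * poch b k * w ^ k / (poch c k * poch d k * (k ! : ℂ))‖ := by
  obtain ⟨K, hK₀, hK⟩ := exists_norm_poch_div_poch_le_pow a c
  obtain ⟨M, _, hM⟩ := exists_norm_poch_div_poch_le_pow b d
  refine .of_nonneg_of_le (fun _ ↦ norm_nonneg _) (fun k ↦ ?_)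
    (Real.summable_pow_div_factorial (K * M * ‖w‖))
  calc ‖poch a k * poch b k * w ^ k / (poch c k * poch d k * (k ! : ℂ))‖
      = ‖poch a k / poch c k‖ * ‖poch b k / poch d k‖ * ‖w‖ ^ k / k ! := by
        rw [mul_div_mul_comm, mul_div_mul_comm, norm_mul, norm_mul, norm_div (w ^ k), norm_pow,
          Complex.norm_natCast, mul_div_assoc]
    _ ≤ K ^ k * M ^ k * ‖w‖ ^ k / k ! := by gcongr <;> [exact hK k; exact hM k]
    _ = (K * M * ‖w‖) ^ k / k ! := by rw [mul_pow, mul_pow]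

lemma tsum_physHermite_mul_betaMoment (a : ℂ) (x : ℝ) :
    ∑' n : ℕ, (physHermite n (x / 2) : ℂ) / n ! * (x / 2 : ℂ) ^ n * betaMoment a n =
      ∑' k : ℕ, (((x / 4) ^ (2 * k) * physHermite (2 * k) (x / 2) : ℝ) : ℂ) /
        (poch (a + 1 / 2) k * k !) := by
  have hsupport : Function.support (fun n : ℕ ↦
      (physHermite n (x / 2) : ℂ) / n ! * (x / 2 : ℂ) ^ n * betaMoment a n) ⊆
        Set.range (2 * ·) := by
    intro n hn
    obtain ⟨k, rfl | rfl⟩ := n.even_or_odd'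
    · exact ⟨k, rfl⟩
    · simp [betaMoment_two_mul_add_one] at hn
  rw [← (mul_right_injective₀ two_ne_zero).tsum_eq hsupport]
  refine tsum_congr fun k ↦ ?_
  have hpow : (x / 2 : ℂ) ^ (2 * k) = 4 ^ k * (x / 4) ^ (2 * k) := by
    rw [pow_mul, pow_mul, ← mul_pow]
    ring
  have hfactorial : ((2 * k)! : ℂ) ≠ 0 := mod_cast Nat.factorial_ne_zero _
  have hpoch : poch (1 / 2) k ≠ 0 := by
    rw [factorial_two_mul_eq_poch] at hfactorial
    exact right_ne_zero_of_mul (left_ne_zero_of_mul hfactorial)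
  rw [betaMoment_two_mul, factorial_two_mul_eq_poch, hpow]
  push_cast
  field_simp

/-- Even Hermite series in closed ₂F₂-form:
`Σ_k (x/4)^{2k} H_{2k}(x/2)/((a+1/2)_k k!) = e^{x²/4} ₂F₂(a/2, (a+1)/2; a, a+1/2; -x²)`. -/
theorem hermite_even_series
    (x : ℝ) (a : ℂ)
    (ha : ∀ n : ℕ, a ≠ -(n : ℂ))
    (ha1 : ∀ n : ℕ, a + 1 / 2 ≠ -(n : ℂ)) :
    ∑' k : ℕ, (((x / 4) ^ (2 * k) * physHermite (2 * k) (x / 2) : ℝ) : ℂ) /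
        (poch (a + 1 / 2) k * (Nat.factorial k : ℂ))
      = Complex.exp ((x : ℂ) ^ 2 / 4) *
          ∑' k : ℕ, poch (a / 2) k * poch ((a + 1) / 2) k * (-(x : ℂ) ^ 2) ^ k /
            (poch a k * poch (a + 1 / 2) k * (Nat.factorial k : ℂ)) := by
  obtain ⟨K, hK⟩ := exists_norm_betaMoment_le_pow a
  have hL (n : ℕ) : ‖betaFunctional a (X ^ n)‖ ≤ K ^ n := by
    rw [betaFunctional_X_pow]
    exact hK n
  have hgenerating := tsum_physHermite_mul_map_pow (betaFunctional a) hL (x / 2) (x / 2)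
  have hterm := betaFunctional_smul_one_sub_X_sq_pow_div_factorial ha ha1 (x : ℂ)
  have hexp : Complex.exp ((x : ℂ) ^ 2 / 4) = NormedSpace.exp ((x / 2 : ℂ) ^ 2) := by
    rw [← Complex.exp_eq_exp_ℂ, div_pow]
    norm_num
  push_cast at hgenerating
  rw [neg_sq_smul_sq_add_two_mul_smul, tsum_map_algebraMap_add_pow] at hgenerating
  · simpa only [betaFunctional_X_pow, tsum_physHermite_mul_betaMoment, hterm, hexp]
      using hgenerating
  · simpa only [hterm] using summable_norm_poch_mul_poch_mul_pow_div _ _ _ _ _
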